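/- For every ε ∈ (0,1), every κ ≥ 2, and k = ⌈√(2L)·√(log(8L/ε))⌉ with L = ⌈κ·log(κ/ε)⌉, there exists a polynomial p of degree at most k with nonnegative Chebyshev coefficients summing to at most L such that max over x in [−1, 1−2/κ] of |1/(1−x) − p(x)| < ε/2. -/

import Mathlib

open Finset Polynomial
open scoped NNReal

noncomputable def chebF (l : ℕ) : ℝ → ℝ := fun x => (Polynomial.Chebyshev.T ℝ (l : ℤ)).eval x

lemma chebF_zero : chebF 0 = fun _ => 1 := by
  funext x; simp [chebF]

lemma chebF_step (f : ℝ → ℝ) (hf : f ∈ Submodule.span ℝ≥0 (Set.range chebF)) :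
    (fun x => (1 + x) / 2 * f x) ∈ Submodule.span ℝ≥0 (Set.range chebF) := by
  induction hf using Submodule.span_induction with
  | mem f hf =>
    obtain ⟨l, rfl⟩ := hf
    have key : ∃ m : ℕ, (fun x => (1 + x) / 2 * chebF l x) =
        ((1/2 : ℝ≥0) • chebF l + (1/4 : ℝ≥0) • chebF (l+1)) + (1/4 : ℝ≥0) • chebF m := by
      refine ⟨((l:ℤ)-1).natAbs, ?_⟩
      funext x
      have h := congrArg (Polynomial.eval x) (Polynomial.Chebyshev.T_add_one ℝ (l:ℤ))
      simp only [Polynomial.eval_sub, Polynomial.eval_mul, Polynomial.eval_X,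
        Polynomial.eval_ofNat] at h
      simp only [chebF, Pi.add_apply, Pi.smul_apply, NNReal.smul_def, smul_eq_mul,
        Polynomial.Chebyshev.T_natAbs]
      push_cast
      rw [h]; ring
    obtain ⟨m, hm⟩ := key
    rw [hm]
    have hb : ∀ j, chebF j ∈ Submodule.span ℝ≥0 (Set.range chebF) :=
      fun j => Submodule.subset_span ⟨j, rfl⟩
    exact Submodule.add_mem _ (Submodule.add_mem _ (Submodule.smul_mem _ _ (hb _))
      (Submodule.smul_mem _ _ (hb _))) (Submodule.smul_mem _ _ (hb _))
  | zero => 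
    convert Submodule.zero_mem _ using 1
    funext x; simp
  | add f g _ _ hf hg =>
    convert Submodule.add_mem _ hf hg using 1
    funext x; simp [mul_add]
  | smul a f _ hf =>
    convert Submodule.smul_mem _ a hf using 1
    funext x; simp only [Pi.smul_apply, NNReal.smul_def, smul_eq_mul]; ring

lemma chebF_pow (t : ℕ) :
    (fun x : ℝ => ((1 + x) / 2)^t) ∈ Submodule.span ℝ≥0 (Set.range chebF) := by
  induction t with
  | zero => 
    refine Submodule.subset_span ⟨0, ?_⟩
    simp [chebF_zero]
  | succ t ih =>
    convert chebF_step _ ih using 1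
    funext x; ring

lemma cheb_exists (L : ℕ) : ∃ c : ℕ →₀ ℝ≥0, ∀ x : ℝ,
    ∑ l ∈ c.support, (c l : ℝ) * chebF l x = 1 / 2 * ∑ t ∈ Finset.range (2 * L), ((1+x)/2)^t := by
  have h : ((1/2 : ℝ≥0) • ∑ t ∈ Finset.range (2 * L), (fun x : ℝ => ((1 + x) / 2)^t)) ∈
      Submodule.span ℝ≥0 (Set.range chebF) :=
    Submodule.smul_mem _ _ (Submodule.sum_mem _ (fun t _ => chebF_pow t))
  rw [Finsupp.mem_span_range_iff_exists_finsupp] at h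
  obtain ⟨c, hc⟩ := h
  refine ⟨c, fun x => ?_⟩
  have := congrFun hc x
  simpa [Finsupp.sum, Finset.sum_apply, NNReal.smul_def] using this

lemma half_cosh_le (a : ℝ) : (1 + Real.cosh a) / 2 ≤ Real.exp (a^2/4) := by
  have h1 : Real.cosh a = 2 * Real.cosh (a/2)^2 - 1 := by
    have := Real.cosh_two_mul (a/2)
    rw [Real.sinh_sq] at this
    rw [show a = 2 * (a/2) by ring, this]; ring_nf
  have h2 := Real.cosh_le_exp_half_sq (a/2)
  have h3 : Real.exp (a^2/4) = Real.exp ((a/2)^2/2)^2 := by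
    rw [← Real.exp_nat_mul]; congr 1; push_cast; ring
  rw [h1, h3]
  have := pow_le_pow_left₀ (Real.cosh_pos (a/2)).le h2 2
  linarith

lemma tail_le (L k : ℕ) (hL : 0 < L) (c : ℕ →₀ ℝ≥0) (hc : ∀ x : ℝ,
    ∑ l ∈ c.support, (c l : ℝ) * chebF l x =
      1 / 2 * ∑ t ∈ Finset.range (2 * L), ((1+x)/2)^t) :
    ∑ l ∈ c.support with k < l, (c l : ℝ) ≤ 2 * L * Real.exp (-((k:ℝ)^2 / (2 * L))) := by
  have hL' : (0:ℝ) < L := by exact_mod_cast hL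
  set a : ℝ := k / L with ha
  have ha0 : 0 ≤ a := by positivity
  have h1 := hc (Real.cosh a)
  have hT : ∀ l, chebF l (Real.cosh a) = Real.cosh (l * a) := by
    intro l; simp [chebF, Polynomial.Chebyshev.T_real_cosh]
  simp only [hT] at h1
  have h2 : ∑ t ∈ Finset.range (2 * L), ((1+Real.cosh a)/2)^t ≤
      2 * L * Real.exp ((k:ℝ)^2 / (2 * L)) := by
    have : ∀ t ∈ Finset.range (2 * L), ((1+Real.cosh a)/2)^t ≤
        Real.exp ((k:ℝ)^2 / (2 * L)) := by
      intro t ht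
      have hb : 1 ≤ (1+Real.cosh a)/2 := by linarith [Real.one_le_cosh a]
      calc ((1+Real.cosh a)/2)^t ≤ ((1+Real.cosh a)/2)^(2*L) :=
            pow_le_pow_right₀ hb (Finset.mem_range.1 ht).le
        _ ≤ (Real.exp (a^2/4))^(2*L) := pow_le_pow_left₀ (by linarith) (half_cosh_le a) _
        _ = _ := by
          rw [← Real.exp_nat_mul]; congr 1; push_cast; rw [ha]; field_simp; ring
    have := Finset.sum_le_card_nsmul _ _ _ this
    simpa using this
  have h3 : Real.exp ((k:ℝ)^2 / L) / 2 * ∑ l ∈ c.support with k < l, (c l : ℝ) ≤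
      ∑ l ∈ c.support, (c l : ℝ) * Real.cosh (l * a) := by
    calc _ = ∑ l ∈ c.support with k < l, (c l : ℝ) * (Real.exp ((k:ℝ)^2 / L) / 2) := by
          rw [mul_comm, Finset.sum_mul]
      _ ≤ ∑ l ∈ c.support with k < l, (c l : ℝ) * Real.cosh (l * a) := by
          refine Finset.sum_le_sum fun l hl => mul_le_mul_of_nonneg_left ?_ (NNReal.coe_nonneg _)
          have hl' : (k:ℝ) ≤ l := by exact_mod_cast (Finset.mem_filter.1 hl).2.le
          have e1 : (k:ℝ)^2 / L ≤ l * a := by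
            rw [show (k:ℝ)^2 / L = k * a by rw [ha]; ring]
            exact mul_le_mul_of_nonneg_right hl' ha0
          rw [Real.cosh_eq]
          have := Real.exp_le_exp.2 e1
          have := Real.exp_pos (-(l * a))
          linarith
      _ ≤ _ := Finset.sum_le_sum_of_subset_of_nonneg (Finset.filter_subset _ _)
          (fun l _ _ => mul_nonneg (NNReal.coe_nonneg _) (Real.cosh_pos _).le)
  set S := ∑ l ∈ c.support with k < l, (c l : ℝ)
  set E := Real.exp ((k:ℝ)^2 / (2 * L)) with hE
  have hEpos : 0 < E := Real.exp_pos _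
  have hEE : Real.exp ((k:ℝ)^2 / L) = E * E := by
    rw [hE, ← Real.exp_add]; congr 1; field_simp; ring
  rw [hEE] at h3
  rw [Real.exp_neg, ← hE, ← div_eq_mul_inv, le_div_iff₀ hEpos]
  have h4 : E * (S * E) ≤ E * (2 * L) := by nlinarith
  exact le_of_mul_le_mul_left h4 hEpos

/-- Chebyshev polynomial approximation of `1/(1−x)`: for every `ε ∈ (0,1)` and `κ ≥ 2`,
with `L = ⌈κ·log(κ/ε)⌉` and `k = ⌈√(2L)·√(log(8L/ε))⌉`, there exists a polynomial
`p = ∑_{l=0}^{k} c_l T_l` of degree at most `k` with nonnegative Chebyshev coefficients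
summing to at most `L`, such that `max_{x ∈ [−1, 1−2/κ]} |1/(1−x) − p(x)| < ε/2`. -/
theorem chebyshev_approx_inv_one_sub (eps kappa : ℝ) (heps : eps ∈ Set.Ioo (0 : ℝ) 1)
    (hkappa : 2 ≤ kappa)
    (L k : ℕ) (hLdef : L = ⌈kappa * Real.log (kappa / eps)⌉₊)
    (hkdef : k = ⌈Real.sqrt (2 * L) * Real.sqrt (Real.log (8 * L / eps))⌉₊) :
    ∃ c : ℕ → ℝ, (∀ l, 0 ≤ c l) ∧ (∀ l, k < l → c l = 0) ∧
      (∑ l ∈ Finset.range (k + 1), c l) ≤ L ∧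
      ∀ x ∈ Set.Icc (-1 : ℝ) (1 - 2 / kappa),
        |1 / (1 - x) - ∑ l ∈ Finset.range (k + 1),
            c l * (Polynomial.Chebyshev.T ℝ (l : ℤ)).eval x| < eps / 2 := by
  obtain ⟨he0, he1⟩ := heps
  have hk0 : 0 < kappa := by linarith
  have hratio : 1 < kappa / eps := by rw [lt_div_iff₀ he0]; linarith
  have hlog : 0 < Real.log (kappa / eps) := Real.log_pos hratio
  have hLge : kappa * Real.log (kappa / eps) ≤ L := by rw [hLdef]; exact Nat.le_ceil _
  have hLR : (0:ℝ) < L := lt_of_lt_of_le (by positivity) hLge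
  have hL : 0 < L := by exact_mod_cast hLR
  have hL1 : (1:ℝ) ≤ L := by exact_mod_cast hL
  have hlog2 : 0 < Real.log (8 * L / eps) := Real.log_pos (by rw [lt_div_iff₀ he0]; linarith)
  have hkge : 2 * L * Real.log (8 * L / eps) ≤ (k:ℝ)^2 := by
    have h : Real.sqrt (2 * L) * Real.sqrt (Real.log (8 * L / eps)) ≤ k := by
      rw [hkdef]; exact Nat.le_ceil _
    have := pow_le_pow_left₀ (by positivity) h 2
    rwa [mul_pow, Real.sq_sqrt (by positivity), Real.sq_sqrt hlog2.le] at this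
  obtain ⟨c, hc⟩ := cheb_exists L
  have htail : ∑ l ∈ c.support with k < l, (c l : ℝ) ≤ eps / 4 := by
    refine (tail_le L k hL c hc).trans ?_
    have h1 : Real.exp (-((k:ℝ)^2 / (2 * L))) ≤ eps / (8 * L) := by
      have h2 : Real.log (8 * L / eps) ≤ (k:ℝ)^2 / (2 * L) := by
        rw [le_div_iff₀ (by positivity)]; linarith
      calc Real.exp (-((k:ℝ)^2 / (2 * L))) ≤ Real.exp (-Real.log (8 * L / eps)) :=
            Real.exp_le_exp.2 (by linarith)
        _ = eps / (8 * L) := by rw [Real.exp_neg, Real.exp_log (by positivity), inv_div]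
    calc _ ≤ 2 * L * (eps / (8 * L)) := mul_le_mul_of_nonneg_left h1 (by positivity)
      _ = eps / 4 := by field_simp; ring
  have hsplit : ∀ g : ℕ → ℝ, ∑ l ∈ Finset.range (k+1), (c l : ℝ) * g l =
      ∑ l ∈ c.support, (c l : ℝ) * g l - ∑ l ∈ c.support with k < l, (c l : ℝ) * g l := by
    intro g
    have h := Finset.sum_filter_add_sum_filter_not c.support (fun l => k < l)
      (fun l => (c l : ℝ) * g l)
    have h2 : ∑ l ∈ Finset.range (k+1), (c l : ℝ) * g l =
        ∑ l ∈ c.support with ¬ k < l, (c l : ℝ) * g l := by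
      symm
      apply Finset.sum_subset
      · intro l hl
        have := (Finset.mem_filter.1 hl).2
        rw [Finset.mem_range]; omega
      · intro l hl hl2
        have : c l = 0 := by
          by_contra hne
          apply hl2
          rw [Finset.mem_filter]
          exact ⟨Finsupp.mem_support_iff.2 hne, by rw [Finset.mem_range] at hl; omega⟩
        simp [this]
    linarith
  have hcong : ∀ g : ℕ → ℝ, ∑ l ∈ Finset.range (k+1), (if l ≤ k then (c l : ℝ) else 0) * g l =
      ∑ l ∈ Finset.range (k+1), (c l : ℝ) * g l := by
    intro g
    refine Finset.sum_congr rfl fun l hl => ?_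
    rw [if_pos (by rw [Finset.mem_range] at hl; omega)]
  refine ⟨fun l => if l ≤ k then (c l : ℝ) else 0, ?_, ?_, ?_, ?_⟩
  · intro l
    dsimp only
    split_ifs
    · exact NNReal.coe_nonneg _
    · exact le_rfl
  · intro l hl
    exact if_neg (by omega)
  · have h1 := hcong (fun _ => 1)
    simp only [mul_one] at h1
    rw [h1]
    have h2 := hsplit (fun _ => 1)
    simp only [mul_one] at h2
    rw [h2]
    have h3 := hc 1
    have h4 : ∀ l, chebF l 1 = 1 := by intro l; simp [chebF]
    simp only [h4, mul_one] at h3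
    norm_num at h3
    have h5 : 0 ≤ ∑ l ∈ c.support with k < l, (c l : ℝ) :=
      Finset.sum_nonneg fun l _ => NNReal.coe_nonneg _
    linarith
  · rintro x ⟨hx1, hx2⟩
    have h1 := hcong (fun l => chebF l x)
    change |1 / (1 - x) - ∑ l ∈ Finset.range (k+1), (if l ≤ k then (c l : ℝ) else 0) * chebF l x| < _
    rw [h1, hsplit, hc x]
    have hkinv : 0 < 1 / kappa := by positivity
    have hx3 : x < 1 := by
      have : 2 / kappa = 2 * (1 / kappa) := by ring
      linarith
    have hxabs : |x| ≤ 1 := abs_le.2 ⟨hx1, hx3.le⟩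
    have ht : |∑ l ∈ c.support with k < l, (c l : ℝ) * chebF l x| ≤ eps / 4 := by
      refine (Finset.abs_sum_le_sum_abs _ _).trans (le_trans ?_ htail)
      refine Finset.sum_le_sum fun l _ => ?_
      rw [abs_mul, abs_of_nonneg (NNReal.coe_nonneg _)]
      exact mul_le_of_le_one_right (NNReal.coe_nonneg _)
        (Polynomial.Chebyshev.abs_eval_T_real_le_one _ hxabs)
    set y := (1 + x) / 2 with hy
    have hy0 : 0 ≤ y := by rw [hy]; linarith
    have hy1 : y ≤ 1 - 1 / kappa := by
      have : 2 / kappa = 2 * (1 / kappa) := by ring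
      rw [hy]; linarith
    have hy2 : y < 1 := by linarith
    have hgeo : 1 / (1 - x) - 1 / 2 * ∑ t ∈ Finset.range (2 * L), y ^ t =
        1 / 2 * (y ^ (2 * L) / (1 - y)) := by
      have hxy : 1 - x = 2 * (1 - y) := by rw [hy]; ring
      have hne : 1 - y ≠ 0 := by linarith
      have hg := mul_neg_geom_sum y (2 * L)
      have hS : ∑ t ∈ Finset.range (2 * L), y ^ t = (1 - y ^ (2 * L)) / (1 - y) := by
        rw [eq_div_iff hne, mul_comm]; exact hg
      rw [hxy, hS]; field_simp; ring
    have hpow : y ^ L ≤ eps / kappa := by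
      calc y ^ L ≤ (Real.exp (-(1 / kappa))) ^ L := by
            refine pow_le_pow_left₀ hy0 (hy1.trans ?_) _
            have := Real.add_one_le_exp (-(1 / kappa))
            linarith
        _ = Real.exp (-(L / kappa)) := by
            rw [← Real.exp_nat_mul]; congr 1; ring
        _ ≤ Real.exp (-Real.log (kappa / eps)) := by
            apply Real.exp_le_exp.2
            have : Real.log (kappa / eps) ≤ L / kappa := by
              rw [le_div_iff₀ hk0]; linarith
            linarith
        _ = eps / kappa := by rw [Real.exp_neg, Real.exp_log (by positivity), inv_div]
    have hrem0 : 0 ≤ 1 / 2 * (y ^ (2 * L) / (1 - y)) := by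
      have : 0 < 1 - y := by linarith
      positivity
    have hrem : 1 / 2 * (y ^ (2 * L) / (1 - y)) < eps / 4 := by
      have hp2 : y ^ (2 * L) ≤ (eps / kappa)^2 := by
        rw [mul_comm, pow_mul]; exact pow_le_pow_left₀ (by positivity) hpow 2
      have : y ^ (2 * L) / (1 - y) ≤ (eps / kappa)^2 / (1 / kappa) :=
        div_le_div₀ (by positivity) hp2 hkinv (by linarith)
      have h6 : (eps / kappa)^2 / (1 / kappa) = eps * eps / kappa := by field_simp
      have h7 : eps * eps / kappa < eps / 2 := by
        rw [div_lt_div_iff₀ hk0 (by norm_num)]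
        nlinarith
      linarith
    rw [sub_sub_eq_add_sub, add_sub_right_comm, hgeo]
    calc _ ≤ |1 / 2 * (y ^ (2 * L) / (1 - y))| + _ := abs_add_le _ _
      _ < eps / 4 + eps / 4 := by rw [abs_of_nonneg hrem0]; exact add_lt_add_of_lt_of_le hrem ht
      _ = eps / 2 := by ring
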